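/- Let R be a one-dimensional Noetherian local ring and M a finitely generated R-module that has a rank. Then [M] = 0 in the reduced rationalized Grothendieck group (G(R)/Z[R]) \otimes_Z Q. -/

import Mathlib

open CategoryTheory IsLocalRing

open scoped TensorProduct

noncomputable section

variable (R : Type) [CommRing R]

/-- Objects: finitely generated `R`-modules (in `Type 0`). -/
def FGMod : Type 1 := {M : ModuleCat.{0} R // Module.Finite R M}

/-- The subgroup of relations coming from short exact sequences. -/
def grothRels : AddSubgroup (FreeAbelianGroup (FGMod R)) :=
  AddSubgroup.closure {x | ∃ (A B C : FGMod R) (f : A.1 →ₗ[R] B.1) (g : B.1 →ₗ[R] C.1),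
    Function.Injective f ∧ Function.Surjective g ∧ Function.Exact f g ∧
    x = FreeAbelianGroup.of B - FreeAbelianGroup.of A - FreeAbelianGroup.of C}

/-- The Grothendieck group of finitely generated `R`-modules. -/
def GGroup : Type 1 := FreeAbelianGroup (FGMod R) ⧸ grothRels R

instance : AddCommGroup (GGroup R) :=
  inferInstanceAs (AddCommGroup (FreeAbelianGroup (FGMod R) ⧸ grothRels R))

/-- The class `[M]` of a finitely generated module in the Grothendieck group. -/
def gclass (M : Type) [AddCommGroup M] [Module R M] [hM : Module.Finite R M] :
    GGroup R :=
  QuotientAddGroup.mk (FreeAbelianGroup.of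
    ⟨ModuleCat.of R M, by exact hM⟩)

/-- The reduced Grothendieck group `G(R)/ℤ·[R]`. -/
def GBar : Type 1 := GGroup R ⧸ AddSubgroup.zmultiples (gclass R R)

instance : AddCommGroup (GBar R) :=
  inferInstanceAs (AddCommGroup (GGroup R ⧸ AddSubgroup.zmultiples (gclass R R)))

/-- The class of `M` in the reduced rationalized Grothendieck group
`(G(R)/ℤ[R]) ⊗_ℤ ℚ`. -/
def gbarQClass (M : Type) [AddCommGroup M] [Module R M] [Module.Finite R M] :
    ℚ ⊗[ℤ] GBar R :=
  (1 : ℚ) ⊗ₜ[ℤ] (QuotientAddGroup.mk (gclass R M) : GBar R)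

end

section Helpers

variable (R : Type) [CommRing R]

/-- The class in the reduced Grothendieck group. -/
def gbarAux (M : Type) [AddCommGroup M] [Module R M] [Module.Finite R M] : GBar R :=
  (QuotientAddGroup.mk (gclass R M) : GBar R)

lemma gbarQ_eq (M : Type) [AddCommGroup M] [Module R M] [Module.Finite R M] :
    gbarQClass R M = (1 : ℚ) ⊗ₜ[ℤ] gbarAux R M := rfl

lemma gbarQ_exact (A B C : Type) [AddCommGroup A] [Module R A] [Module.Finite R A]
    [AddCommGroup B] [Module R B] [Module.Finite R B]
    [AddCommGroup C] [Module R C] [Module.Finite R C]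
    (f : A →ₗ[R] B) (g : B →ₗ[R] C) (hf : Function.Injective f) (hg : Function.Surjective g)
    (h : Function.Exact f g) : gbarQClass R B = gbarQClass R A + gbarQClass R C := by
  have key : gclass R B = gclass R A + gclass R C := by
    have hm : (FreeAbelianGroup.of (⟨ModuleCat.of R B, by assumption⟩ : FGMod R)
        - FreeAbelianGroup.of (⟨ModuleCat.of R A, by assumption⟩ : FGMod R)
        - FreeAbelianGroup.of (⟨ModuleCat.of R C, by assumption⟩ : FGMod R)) ∈ grothRels R :=
      AddSubgroup.subset_closure ⟨_, _, _, f, g, hf, hg, h, rfl⟩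
    symm
    refine QuotientAddGroup.eq.2 ?_
    rw [neg_add_eq_sub, ← sub_sub]
    exact hm
  have key2 : gbarAux R B = gbarAux R A + gbarAux R C := by
    unfold gbarAux
    rw [key]
    rfl
  rw [gbarQ_eq, gbarQ_eq, gbarQ_eq, key2, TensorProduct.tmul_add]

lemma gbarQ_subsingleton (A : Type) [AddCommGroup A] [Module R A] [Module.Finite R A]
    [Subsingleton A] : gbarQClass R A = 0 := by
  have h := gbarQ_exact R A A A LinearMap.id LinearMap.id Function.injective_id
    Function.surjective_id (fun x => by simp [Subsingleton.elim x 0])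
  simpa using h

lemma gbarQ_equiv (A B : Type) [AddCommGroup A] [Module R A] [Module.Finite R A]
    [AddCommGroup B] [Module R B] [Module.Finite R B] (e : A ≃ₗ[R] B) :
    gbarQClass R A = gbarQClass R B := by
  have h := gbarQ_exact R A B PUnit.{1} e.toLinearMap 0 e.injective
    (fun x => ⟨0, Subsingleton.elim _ _⟩) (fun x => by simpa using e.surjective x)
  rw [gbarQ_subsingleton R PUnit.{1}, add_zero] at h
  exact h.symm

lemma gbarQ_self : gbarQClass R R = 0 := by
  have : gbarAux R R = 0 :=
    (QuotientAddGroup.eq_zero_iff _).2 (AddSubgroup.mem_zmultiples _)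
  rw [gbarQ_eq, this, TensorProduct.tmul_zero]

lemma gbarQ_free (n : ℕ) : gbarQClass R (Fin n → R) = 0 := by
  induction n with
  | zero => exact gbarQ_subsingleton R _
  | succ n ih =>
    rw [← gbarQ_equiv R _ _ (Fin.consLinearEquiv R (fun _ : Fin (n+1) => R)),
      gbarQ_exact R R (R × (Fin n → R)) (Fin n → R) (LinearMap.inl _ _ _) (LinearMap.snd _ _ _)
      LinearMap.inl_injective LinearMap.snd_surjective Function.Exact.inl_snd, ih, gbarQ_self,
      add_zero]

/-- Support in the closed point, elementwise. -/
def TorsAway (N : Type) [AddCommGroup N] [Module R N] [IsLocalRing R] : Prop :=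
  ∀ q : Ideal R, q.IsPrime → q ≠ maximalIdeal R → ∀ y : N, ∃ s ∉ q, s • y = 0

lemma gbarQ_tors [IsNoetherianRing R] [IsLocalRing R]
    (N : Type) [AddCommGroup N] [Module R N] [hN : Module.Finite R N] :
    TorsAway R N → ∃ n : ℕ, gbarQClass R N = n • gbarQClass R (R ⧸ maximalIdeal R) ∧
      (n = 0 → Subsingleton N) := by
  induction hN using IsNoetherianRing.induction_on_isQuotientEquivQuotientPrime R with
  | subsingleton N => exact fun _ => ⟨0, by simp [gbarQ_subsingleton], fun _ => inferInstance⟩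
  | quotient N p e =>
    intro h
    have hp : p.1 = maximalIdeal R := by
      by_contra hne
      obtain ⟨s, hs, h0⟩ := h p.1 p.2 hne (e.symm 1)
      rw [← map_smul, map_eq_zero_iff _ e.symm.injective, Algebra.smul_def, mul_one] at h0
      exact hs (Ideal.Quotient.eq_zero_iff_mem.1 h0)
    refine ⟨1, ?_, by simp⟩
    rw [one_smul]
    exact gbarQ_equiv R _ _ (e.trans (Submodule.quotEquivOfEq _ _ hp))
  | exact N₁ N₂ N₃ f g hf hg hfg h₁ h₃ =>
    intro h
    obtain ⟨a, ha, ha'⟩ := h₁ (fun q hq hne y => by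
      obtain ⟨s, hs, h0⟩ := h q hq hne (f y)
      exact ⟨s, hs, hf (by simpa using h0)⟩)
    obtain ⟨b, hb, hb'⟩ := h₃ (fun q hq hne y => by
      obtain ⟨y, rfl⟩ := hg y
      obtain ⟨s, hs, h0⟩ := h q hq hne y
      exact ⟨s, hs, by rw [← map_smul, h0, map_zero]⟩)
    refine ⟨a + b, by rw [gbarQ_exact R _ _ _ f g hf hg hfg, ha, hb, add_smul], fun hab => ?_⟩
    have := ha' (by omega)
    have := hb' (by omega)
    refine subsingleton_of_forall_eq 0 fun y => ?_
    obtain ⟨x, rfl⟩ := (hfg y).1 (Subsingleton.elim _ _)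
    rw [Subsingleton.elim x 0, map_zero]

variable {R}

lemma surj_of_congr {F M : Type} [AddCommGroup F] [Module R F] [AddCommGroup M] [Module R M]
    [Module.Finite R M] (p : Ideal R) [p.IsPrime] (g f : F →ₗ[R] M)
    (hg : ∀ y, ∃ s ∉ p, s • y ∈ LinearMap.range g) (s : R) (hs : s ∉ p)
    (h : ∀ b, f b - s • g b ∈ p • (⊤ : Submodule R M)) :
    ∀ y, ∃ s ∉ p, s • y ∈ LinearMap.range f := by
  let C := M ⧸ LinearMap.range f
  let A := Localization.AtPrime p
  let CP := LocalizedModule p.primeCompl C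
  have hC : ∀ c : C, ∃ t ∉ p, t • c ∈ p • (⊤ : Submodule R C) := by
    intro c
    obtain ⟨y, rfl⟩ := Submodule.mkQ_surjective _ c
    obtain ⟨u, hu, b, hb⟩ := hg y
    refine ⟨s * u, fun hh => (Ideal.IsPrime.mem_or_mem ‹_› hh).elim hs hu, ?_⟩
    have h1 : (LinearMap.range f).mkQ (f b - s • g b) ∈ p • (⊤ : Submodule R C) := by
      have := Submodule.mem_map_of_mem (f := (LinearMap.range f).mkQ) (h b)
      rw [Submodule.map_smul''] at this
      exact Submodule.smul_mono le_rfl le_top this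
    have h2 : (LinearMap.range f).mkQ (f b) = 0 := by simp
    rw [map_sub, h2, zero_sub, Submodule.neg_mem_iff, hb, smul_smul, map_smul] at h1
    exact h1
  have hle : ∀ c ∈ p • (⊤ : Submodule R C), LocalizedModule.mkLinearMap p.primeCompl C c ∈
      maximalIdeal A • (⊤ : Submodule A CP) := by
    intro c hc
    induction hc using Submodule.smul_induction_on' with
    | smul r hr n hn =>
      rw [map_smul, ← algebraMap_smul A r]
      refine Submodule.smul_mem_smul ?_ trivial
      exact (IsLocalization.AtPrime.to_map_mem_maximal_iff A p r).2 hr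
    | add x hx y hy h1 h2 => rw [map_add]; exact add_mem h1 h2
  have hbot : (⊤ : Submodule A CP) = ⊥ := by
    refine Submodule.eq_bot_of_le_smul_of_le_jacobson_bot (maximalIdeal A) ⊤
      Module.Finite.fg_top ?_ (IsLocalRing.maximalIdeal_le_jacobson _)
    rintro z -
    obtain ⟨⟨c, u⟩, hz⟩ := IsLocalizedModule.surj p.primeCompl
      (LocalizedModule.mkLinearMap p.primeCompl C) z
    obtain ⟨t, ht, htc⟩ := hC c
    have h1 := hle _ htc
    rw [map_smul, ← hz, Submonoid.smul_def, smul_smul, ← algebraMap_smul A (t * (u : R))] at h1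
    have hun : IsUnit (algebraMap R A (t * u)) :=
      IsLocalization.map_units A (⟨t, ht⟩ * u : p.primeCompl)
    exact (Submodule.smul_mem_iff_of_isUnit _ hun).1 h1
  intro y
  have h0 : LocalizedModule.mkLinearMap p.primeCompl C ((LinearMap.range f).mkQ y) = 0 := by
    have : LocalizedModule.mkLinearMap p.primeCompl C ((LinearMap.range f).mkQ y) ∈
      (⊤ : Submodule A CP) := trivial
    rw [hbot] at this
    exact this
  obtain ⟨t, ht⟩ := (IsLocalizedModule.eq_zero_iff p.primeCompl _).1 h0
  refine ⟨t, t.2, ?_⟩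
  rw [Submonoid.smul_def, ← map_smul] at ht
  exact (Submodule.Quotient.mk_eq_zero _).1 ht

/-- The localization map on `R^r`. -/
noncomputable def locPi (p : Ideal R) [p.IsPrime] (r : ℕ) :
    (Fin r → R) →ₗ[R] (Fin r → Localization p.primeCompl) :=
  .pi fun i ↦ Algebra.linearMap R (Localization p.primeCompl) ∘ₗ .proj i

instance (p : Ideal R) [p.IsPrime] (r : ℕ) : IsLocalizedModule p.primeCompl (locPi p r) :=
  IsLocalizedModule.pi p.primeCompl fun _ => Algebra.linearMap R (Localization p.primeCompl)

lemma exists_local {M : Type} [AddCommGroup M] [Module R M] (p : Ideal R) [p.IsPrime] (r : ℕ)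
    (e : (LocalizedModule p.primeCompl M) ≃ₗ[Localization p.primeCompl]
        (Fin r → Localization p.primeCompl)) :
    ∃ g : (Fin r → R) →ₗ[R] M, ∀ y, ∃ s ∉ p, s • y ∈ LinearMap.range g := by
  obtain ⟨g, s, hg⟩ := Module.FinitePresentation.exists_lift_of_isLocalizedModule p.primeCompl
    (LocalizedModule.mkLinearMap p.primeCompl M)
    ((e.symm.toLinearMap.restrictScalars R) ∘ₗ locPi p r)
  refine ⟨g, fun y => ?_⟩
  obtain ⟨⟨b, t⟩, hb⟩ := IsLocalizedModule.surj p.primeCompl (locPi p r)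
    (e (LocalizedModule.mkLinearMap p.primeCompl M y))
  have h1 : LocalizedModule.mkLinearMap p.primeCompl M (g b) =
      LocalizedModule.mkLinearMap p.primeCompl M ((s * t : p.primeCompl) • y) := by
    have := LinearMap.congr_fun hg b
    simp only [LinearMap.comp_apply, LinearMap.smul_apply, LinearMap.restrictScalars_apply,
      LinearEquiv.coe_coe] at this
    have h2 : e.symm (locPi p r b) =
        (t : R) • LocalizedModule.mkLinearMap p.primeCompl M y := by
      rw [← hb, Submonoid.smul_def, ← algebraMap_smul (Localization p.primeCompl) (t : R),
        e.symm.map_smul, e.symm_apply_apply, algebraMap_smul]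
    rw [this, h2, Submonoid.smul_def, Submonoid.smul_def, map_smul, Submonoid.coe_mul, mul_smul]
  obtain ⟨c, hc⟩ := IsLocalizedModule.exists_of_eq (S := p.primeCompl) h1
  refine ⟨(c * (s * t) : p.primeCompl), (c * (s * t) : p.primeCompl).2, c • b, ?_⟩
  rw [Submonoid.smul_def, map_smul, ← Submonoid.smul_def, hc, ← mul_smul]
  rfl

lemma inj_local {M : Type} [AddCommGroup M] [Module R M] (p : Ideal R) [p.IsPrime] (r : ℕ)
    (e : (LocalizedModule p.primeCompl M) ≃ₗ[Localization p.primeCompl]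
        (Fin r → Localization p.primeCompl))
    (f : (Fin r → R) →ₗ[R] M) (hf : ∀ y, ∃ s ∉ p, s • y ∈ LinearMap.range f)
    (x : Fin r → R) (hx : f x = 0) : ∃ s ∉ p, s • x = 0 := by
  let A := Localization p.primeCompl
  let G : (Fin r → A) →ₗ[A] LocalizedModule p.primeCompl M :=
    IsLocalizedModule.mapExtendScalars p.primeCompl (locPi p r)
      (LocalizedModule.mkLinearMap p.primeCompl M) A f
  have hG : ∀ b, G (locPi p r b) = LocalizedModule.mkLinearMap p.primeCompl M (f b) := by
    intro b
    simp [G]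
  have hsurj : Function.Surjective G := by
    rw [← LinearMap.range_eq_top, eq_top_iff]
    rintro z -
    obtain ⟨⟨y, u⟩, hz⟩ := IsLocalizedModule.surj p.primeCompl
      (LocalizedModule.mkLinearMap p.primeCompl M) z
    obtain ⟨t, ht, b, hb⟩ := hf y
    have h1 : t • LocalizedModule.mkLinearMap p.primeCompl M y ∈ LinearMap.range G :=
      ⟨locPi p r b, by rw [hG, hb, map_smul]⟩
    rw [← hz, Submonoid.smul_def, smul_smul, ← algebraMap_smul A (t * (u : R))] at h1
    have hun : IsUnit (algebraMap R A (t * u)) :=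
      IsLocalization.map_units A (⟨t, ht⟩ * u : p.primeCompl)
    exact (Submodule.smul_mem_iff_of_isUnit _ hun).1 h1
  have : Module.Finite A (LocalizedModule p.primeCompl M) := Module.Finite.equiv e.symm
  have hinj : Function.Injective G :=
    OrzechProperty.injective_of_surjective_of_injective e.symm.toLinearMap G e.symm.injective hsurj
  have h0 : locPi p r x = 0 := hinj (by rw [hG, hx, map_zero, map_zero])
  obtain ⟨t, ht⟩ := (IsLocalizedModule.eq_zero_iff p.primeCompl _).1 h0
  exact ⟨t, t.2, ht⟩

end Helpers

/-- over a one-dimensional Noetherian local ring, a finitely generated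
module having a rank has zero class in the reduced rationalized Grothendieck group. -/
theorem stmt_13 (R : Type) [CommRing R] [IsNoetherianRing R] [IsLocalRing R]
    (hdim : ringKrullDim R = 1)
    (M : Type) [AddCommGroup M] [Module R M] [Module.Finite R M]
    (hrank : ∃ r : ℕ, ∀ (p : Ideal R) (hp : p ∈ associatedPrimes R R),
      haveI : p.IsPrime := hp.1
      Nonempty ((LocalizedModule p.primeCompl M) ≃ₗ[Localization p.primeCompl]
        (Fin r → Localization p.primeCompl))) :
    gbarQClass R M = 0 := by
  classical
  obtain ⟨r, hr⟩ := hrank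
  have hloc : ∀ p : Ideal R, p ∈ associatedPrimes R R → ∃ g : (Fin r → R) →ₗ[R] M,
      ∀ y, ∃ s ∉ p, s • y ∈ LinearMap.range g := by
    intro p hp
    have : p.IsPrime := hp.1
    exact exists_local p r (hr p hp).some
  have hinj : ∀ p : Ideal R, p ∈ associatedPrimes R R → ∀ f : (Fin r → R) →ₗ[R] M,
      (∀ y, ∃ s ∉ p, s • y ∈ LinearMap.range f) → ∀ x, f x = 0 → ∃ s ∉ p, s • x = 0 := by
    intro p hp
    have : p.IsPrime := hp.1
    exact inj_local p r (hr p hp).some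
  have hfin := associatedPrimes.finite R R
  have hnzd : ∀ I : Ideal R, (∀ p ∈ associatedPrimes R R, ¬ I ≤ p) →
      ∃ x ∈ I, x ∈ nonZeroDivisors R := by
    intro I hI
    by_contra! hcon
    obtain ⟨p, hp, hle⟩ := (I.subset_union_prime_finite hfin (f := id) 0 0
      fun _ h _ _ ↦ h.1).1 (by
        simp_rw [id, biUnion_associatedPrimes_eq_compl_nonZeroDivisors]
        exact hcon)
    exact hI p hp hle
  by_cases hm : maximalIdeal R ∈ associatedPrimes R R
  · obtain ⟨f, hf⟩ := hloc _ hm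
    have hunit : ∀ s : R, s ∉ maximalIdeal R → IsUnit s := fun s hs => by
      simpa using hs
    have h1 : Function.Injective f := (injective_iff_map_eq_zero f).2 fun x hx => by
      obtain ⟨s, hs, h0⟩ := hinj _ hm f hf x hx
      exact (hunit s hs).smul_eq_zero.1 h0
    have h2 : Function.Surjective f := fun y => by
      obtain ⟨s, hs, h0⟩ := hf y
      exact (Submodule.smul_mem_iff_of_isUnit _ (hunit s hs)).1 h0
    rw [← gbarQ_equiv R _ _ (LinearEquiv.ofBijective f ⟨h1, h2⟩), gbarQ_free]
  -- now the depth one case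
  have hdl : Ring.KrullDimLE 1 R := Ring.krullDimLE_iff.2 hdim.le
  have hmin : ∀ q : Ideal R, q.IsPrime → q ≠ maximalIdeal R → q ∈ minimalPrimes R :=
    fun q hq hne => (Ring.krullDimLE_one_iff.1 hdl q hq).resolve_right
      fun h => hne (IsLocalRing.eq_maximalIdeal h)
  have hminass : ∀ q ∈ minimalPrimes R, q ∈ associatedPrimes R R := fun q hq => by
    refine Module.associatedPrimes.minimalPrimes_annihilator_subset_associatedPrimes R R ?_
    have : Module.annihilator R R = ⊥ := Module.annihilator_eq_bot.2 inferInstance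
    rw [this]
    exact hq
  have hassmin : ∀ p ∈ associatedPrimes R R, p ∈ minimalPrimes R := fun p hp =>
    hmin p hp.1 fun h => hm (h ▸ hp)
  -- residue field
  have hk : gbarQClass R (R ⧸ maximalIdeal R) = 0 := by
    obtain ⟨x, hx, hxr⟩ := hnzd (maximalIdeal R) fun p hp hle => hm (by
      rwa [IsLocalRing.maximalIdeal.isMaximal R |>.eq_of_le hp.1.ne_top hle])
    have hex := gbarQ_exact R R R (R ⧸ Ideal.span {x}) (LinearMap.mulLeft R x)
      (Ideal.span {x}).mkQ (fun a b hab => (mul_cancel_left_mem_nonZeroDivisors hxr).1 hab)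
      (Submodule.mkQ_surjective _) (fun a => by
        rw [Submodule.mkQ_apply, Submodule.Quotient.mk_eq_zero, Ideal.mem_span_singleton']
        simp [mul_comm, eq_comm])
    rw [gbarQ_self, zero_add] at hex
    obtain ⟨n, hn, hn0⟩ := gbarQ_tors R (R ⧸ Ideal.span {x}) (fun q hq hne y => by
      refine ⟨x, fun hxq => ?_, ?_⟩
      · have : x ∈ ((nonZeroDivisors R : Set R)ᶜ) := by
          rw [← biUnion_associatedPrimes_eq_compl_nonZeroDivisors]
          exact Set.mem_biUnion (hminass q (hmin q hq hne)) hxq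
        exact this hxr
      · obtain ⟨y, rfl⟩ := Submodule.mkQ_surjective _ y
        rw [← map_smul, Submodule.mkQ_apply, Submodule.Quotient.mk_eq_zero]
        exact Ideal.mul_mem_right _ _ (Ideal.mem_span_singleton_self x))
    have hne : n ≠ 0 := fun h => by
      have := hn0 h
      rw [Ideal.Quotient.subsingleton_iff, Ideal.span_singleton_eq_top] at this
      exact (mem_maximalIdeal x).1 hx this
    rw [← hex] at hn
    have hq : (n : ℚ) • gbarQClass R (R ⧸ maximalIdeal R) = 0 := by
      rw [Nat.cast_smul_eq_nsmul]; exact hn.symm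
    exact (smul_eq_zero.1 hq).resolve_left (by exact_mod_cast hne)
  -- the global map
  obtain ⟨f, hf⟩ : ∃ f : (Fin r → R) →ₗ[R] M, ∀ p ∈ associatedPrimes R R,
      ∀ y, ∃ s ∉ p, s • y ∈ LinearMap.range f := by
    choose! g hg using hloc
    have hs : ∀ p ∈ associatedPrimes R R, ∃ s ∉ p, ∀ q ∈ hfin.toFinset.erase p, s ∈ q := by
      intro p hp
      have : ¬ (hfin.toFinset.erase p).inf id ≤ p := by
        rw [Ideal.IsPrime.inf_le' hp.1]
        rintro ⟨q, hq, hle⟩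
        rw [Finset.mem_erase, Set.Finite.mem_toFinset] at hq
        exact hq.1 (le_antisymm hle ((hassmin p hp).2 ⟨hq.2.1, bot_le⟩ hle))
      obtain ⟨s, hs1, hs2⟩ := SetLike.not_le_iff_exists.1 this
      exact ⟨s, hs2, fun q hq => (Finset.inf_le (f := id) hq) hs1⟩
    choose! s hs1 hs2 using hs
    refine ⟨∑ p ∈ hfin.toFinset, s p • g p, fun p hp => ?_⟩
    have : p.IsPrime := hp.1
    refine surj_of_congr p (g p) _ (hg p hp) (s p) (hs1 p hp) fun b => ?_
    rw [← Finset.add_sum_erase _ _ (hfin.mem_toFinset.2 hp), LinearMap.add_apply,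
      LinearMap.smul_apply, add_sub_cancel_left, LinearMap.sum_apply]
    refine Submodule.sum_mem _ fun q hq => ?_
    rw [Finset.mem_erase, Set.Finite.mem_toFinset] at hq
    exact Submodule.smul_mem_smul (hs2 q hq.2 p
      (Finset.mem_erase.2 ⟨hq.1.symm, hfin.mem_toFinset.2 hp⟩)) trivial
  have hfi : Function.Injective f := (injective_iff_map_eq_zero f).2 fun x hx => by
    obtain ⟨t, ht, htr⟩ := hnzd (LinearMap.ker (LinearMap.toSpanSingleton R _ x))
      fun p hp hle => by
        obtain ⟨s, hs, h0⟩ := hinj p hp f (hf p hp) x hx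
        exact hs (hle (by simpa using h0))
    have ht' : t • x = 0 := by simpa using ht
    funext i
    exact (mul_left_mem_nonZeroDivisors_eq_zero_iff htr).1 (congrFun ht' i)
  obtain ⟨n, hn, -⟩ := gbarQ_tors R (M ⧸ LinearMap.range f) (fun q hq hne y => by
    obtain ⟨y, rfl⟩ := Submodule.mkQ_surjective _ y
    obtain ⟨s, hs, h0⟩ := hf q (hminass q (hmin q hq hne)) y
    exact ⟨s, hs, by rwa [← map_smul, Submodule.mkQ_apply, Submodule.Quotient.mk_eq_zero]⟩)
  rw [gbarQ_exact R _ _ _ f (LinearMap.range f).mkQ hfi (Submodule.mkQ_surjective _)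
    (LinearMap.exact_map_mkQ_range f), gbarQ_free, hn, hk, smul_zero, add_zero]
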